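/- Let η(x) = 1/(x+i) and define h(x) = η(x)/4 − (i/2)η′(x) = 1/(4(x+i)) + i/(2(x+i)²). Then the Fourier transform of h is supported in [0,∞), and the Fourier transform of |η|²η − h, i.e. of x ↦ 1/((x+i)²(x−i)) − h(x) = −1/(4(x−i)), is supported in (−∞,0]. Consequently Π(|η|²η) = h, i.e. (i/2)η′ + Π(|η|²η) − η/4 = 0, so η is a critical point of the functional E(u) = (1/4)∫|u|⁴ dx + (i/4)∫ u′ conj(u) dx − (1/8)∫|u|² dx. -/

import Mathlib

open MeasureTheory Filter

noncomputable section

/-- `η(x) = 1/(x+i)`. -/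
def eta (x : ℝ) : ℂ := 1 / (x + Complex.I)

/-- Truncated Fourier integral `∫_{-R}^{R} e^{-ixξ} f(x) dx`. -/
def truncFT (f : ℝ → ℂ) (ξ R : ℝ) : ℂ :=
  ∫ x in (-R)..R, Complex.exp (-(Complex.I * x * ξ)) * f x

/-- The Fourier transform `f̂(ξ) = ∫ e^{-ixξ} f(x) dx`, taken as the improper
(symmetric principal value) limit of truncated integrals. -/
def FT (f : ℝ → ℂ) (ξ : ℝ) : ℂ := limUnder atTop (truncFT f ξ)

/-- `SzegoProjEq f g` says that `g = Π f` where `Π` is the Szegő projector: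
the Fourier transform of `g` is `1_{[0,∞)}` times that of `f`. -/
def SzegoProjEq (f g : ℝ → ℂ) : Prop :=
  ∀ᵐ ξ : ℝ ∂MeasureTheory.volume, FT g ξ = if 0 ≤ ξ then FT f ξ else 0

/-- `h = η/4 - (i/2)η'`. -/
def hfun (x : ℝ) : ℂ := eta x / 4 - Complex.I / 2 * deriv eta x

/-!
A function which is continuous on the closed upper half-plane, holomorphic inside and vanishing at
infinity has no negative frequencies: for `ξ < 0` the kernel `e^{-izξ}` decays upwards, so Cauchy's
theorem on a large square moves `∫_{-R}^{R}` to the three other sides, where the integrand is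
negligible (Jordan's lemma). By the symmetry `z ↦ -z`, functions of the lower half-plane have no
positive frequencies. Partial fractions split `|η|²η = 1/((x+i)²(x-i))` into `h`, whose only pole
is `-i`, and `-1/(4(x-i))`, whose only pole is `i`; hence `h` is the part of `|η|²η` with
nonnegative frequencies.
-/

open Complex hiding eta
open Bornology Interval Topology

section JordanLemma

variable {E : Type*} [NormedAddCommGroup E] [NormedSpace ℂ E]

lemma norm_exp_I_mul_smul (a : ℝ) (z : ℂ) (v : E) :
    ‖exp (I * a * z) • v‖ = Real.exp (-(a * z.im)) * ‖v‖ := by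
  simp [norm_smul, norm_exp]

lemma integral_exp_neg_mul_le {a : ℝ} (ha : 0 < a) (b : ℝ) :
    ∫ y in 0..b, Real.exp (-(a * y)) ≤ 1 / a := by
  have h_integral : ∫ y in 0..b, Real.exp (-(a * y)) = (1 - Real.exp (-(a * b))) / a := by
    simp_rw [← neg_mul]
    rw [intervalIntegral.integral_comp_mul_left _ (neg_ne_zero.2 ha.ne'), integral_exp]
    simp only [mul_zero, Real.exp_zero, smul_eq_mul]
    field_simp
    ring
  rw [h_integral]
  gcongr
  linarith [Real.exp_pos (-(a * b))]

lemma norm_integral_vertical_exp_smul_le {a b ε : ℝ} (ha : 0 < a) (hb : 0 ≤ b)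
    {v : ℝ → E} (hv : ∀ y ∈ Set.Icc 0 b, ‖v y‖ ≤ ε) (s : ℝ) :
    ‖∫ y in 0..b, exp (I * a * (s + y * I)) • v y‖ ≤ ε / a := by
  have hε : 0 ≤ ε := (norm_nonneg _).trans (hv 0 (Set.left_mem_Icc.2 hb))
  calc ‖∫ y in 0..b, exp (I * a * (s + y * I)) • v y‖
      ≤ ∫ y in 0..b, Real.exp (-(a * y)) * ε := by
        refine intervalIntegral.norm_integral_le_of_norm_le hb (.of_forall fun y hy ↦ ?_)
          (Continuous.intervalIntegrable (by fun_prop) _ _)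
        rw [norm_exp_I_mul_smul]
        simpa using
          mul_le_mul_of_nonneg_left (hv y (Set.Ioc_subset_Icc_self hy)) (Real.exp_nonneg _)
    _ = (∫ y in 0..b, Real.exp (-(a * y))) * ε := intervalIntegral.integral_mul_const _ _
    _ ≤ 1 / a * ε := by gcongr; exact integral_exp_neg_mul_le ha b
    _ = ε / a := by ring

lemma norm_integral_horizontal_exp_smul_le {a R ε : ℝ} (ha : 0 < a) (hR : 0 ≤ R)
    {v : ℝ → E} (hv : ∀ x ∈ Set.Icc (-R) R, ‖v x‖ ≤ ε) :
    ‖∫ x in (-R)..R, exp (I * a * (x + R * I)) • v x‖ ≤ 2 * ε / a := by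
  have hRR : -R ≤ R := by linarith
  have hε : 0 ≤ ε := (norm_nonneg _).trans (hv R (Set.right_mem_Icc.2 hRR))
  have h_exp : a * R * Real.exp (-(a * R)) ≤ 1 :=
    (Real.mul_exp_neg_le_exp_neg_one _).trans (Real.exp_le_one_iff.2 (by norm_num))
  calc ‖∫ x in (-R)..R, exp (I * a * (x + R * I)) • v x‖
      ≤ Real.exp (-(a * R)) * ε * |R - -R| := by
        refine intervalIntegral.norm_integral_le_of_norm_le_const fun x hx ↦ ?_
        have hx' : x ∈ Set.Icc (-R) R := Set.uIcc_of_le hRR ▸ Set.uIoc_subset_uIcc hx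
        rw [norm_exp_I_mul_smul]
        simpa using mul_le_mul_of_nonneg_left (hv x hx') (Real.exp_nonneg _)
    _ = a * R * Real.exp (-(a * R)) * (2 * ε / a) := by
        rw [abs_of_nonneg (by linarith)]
        field_simp
        ring
    _ ≤ 2 * ε / a := mul_le_of_le_one_left (by positivity) h_exp

lemma integral_eq_square_sides_of_diffContOnCl {f : ℂ → E}
    (hf : DiffContOnCl ℂ f {z | 0 < z.im}) {R : ℝ} (hR : 0 ≤ R) :
    ∫ x in (-R)..R, f x = (∫ x in (-R)..R, f (x + R * I))
      - I • (∫ y in 0..R, f (R + y * I)) + I • ∫ y in 0..R, f ((-R : ℝ) + y * I) := by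
  have h_cont : ContinuousOn f ([[-R, R]] ×ℂ [[0, R]]) := by
    refine hf.continuousOn.mono fun z hz ↦ ?_
    rw [closure_setOfPred_lt_im]
    exact (Set.uIcc_of_le hR ▸ hz.2).1
  have h_diff : DifferentiableOn ℂ f (Set.Ioo (min (-R) R) (max (-R) R) ×ℂ
      Set.Ioo (min 0 R) (max 0 R)) :=
    hf.differentiableOn.mono fun z hz ↦ (min_eq_left hR ▸ hz.2.1 : 0 < z.im)
  have h_rect := integral_boundary_rect_eq_zero_of_continuousOn_of_differentiableOn f
    (-R : ℝ) (R + R * I) (by simpa using h_cont) (by simpa using h_diff)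
  simp only [ofReal_re, ofReal_im, add_re, add_im, re_ofReal_mul, im_ofReal_mul, I_re, I_im,
    mul_zero, mul_one, zero_mul, add_zero, zero_add, ofReal_zero] at h_rect
  linear_combination (norm := module) h_rect

theorem norm_integral_exp_smul_le_of_diffContOnCl {g : ℂ → E}
    (hg : DiffContOnCl ℂ g {z | 0 < z.im}) {a R ε : ℝ} (ha : 0 < a) (hR : 0 ≤ R)
    (hε : ∀ z : ℂ, 0 ≤ z.im → R ≤ ‖z‖ → ‖g z‖ ≤ ε) :
    ‖∫ x in (-R)..R, exp (I * a * x) • g x‖ ≤ 4 * ε / a := by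
  have h_top :
      ‖∫ x in (-R)..R, exp (I * a * (x + R * I)) • g (x + R * I)‖ ≤ 2 * ε / a :=
    norm_integral_horizontal_exp_smul_le ha hR fun x _ ↦ hε _ (by simpa using hR)
      (by simpa [abs_of_nonneg hR] using abs_im_le_norm (x + R * I))
  have h_side (s : ℝ) (hs : |s| = R) :
      ‖∫ y in 0..R, exp (I * a * (s + y * I)) • g (s + y * I)‖ ≤ ε / a :=
    norm_integral_vertical_exp_smul_le ha hR (fun y hy ↦ hε _ (by simpa using hy.1)
      (by simpa [hs] using abs_re_le_norm (s + y * I))) s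
  have h_right := h_side R (abs_of_nonneg hR)
  have h_left := h_side (-R) (by rw [abs_neg, abs_of_nonneg hR])
  have h_exp : DiffContOnCl ℂ (fun z : ℂ ↦ exp (I * a * z)) {z | 0 < z.im} :=
    Differentiable.diffContOnCl (by fun_prop)
  rw [integral_eq_square_sides_of_diffContOnCl (h_exp.smul hg) hR]
  refine (norm_add_le_of_le (norm_sub_le _ _) le_rfl).trans ?_
  simp only [norm_smul I, norm_I, one_mul]
  linear_combination h_top + h_right + h_left

theorem tendsto_integral_exp_smul_of_diffContOnCl {g : ℂ → E}
    (hg : DiffContOnCl ℂ g {z | 0 < z.im})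
    (hg₀ : Tendsto g (cobounded ℂ ⊓ 𝓟 {z | 0 ≤ z.im}) (𝓝 0)) {a : ℝ} (ha : 0 < a) :
    Tendsto (fun R : ℝ ↦ ∫ x in (-R)..R, exp (I * a * x) • g x) atTop (𝓝 0) := by
  refine NormedAddGroup.tendsto_nhds_zero.2 fun ε hε ↦ ?_
  have h_small : ∀ᶠ z in cobounded ℂ, 0 ≤ z.im → ‖g z‖ < a * ε / 8 :=
    eventually_inf_principal.1 (NormedAddGroup.tendsto_nhds_zero.1 hg₀ _ (by positivity))
  obtain ⟨R₀, -, hR₀⟩ := hasBasis_cobounded_norm.eventually_iff.1 h_small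
  filter_upwards [eventually_ge_atTop 0, eventually_ge_atTop R₀] with R hR hRR₀
  calc ‖∫ x in (-R)..R, exp (I * a * x) • g x‖
      ≤ 4 * (a * ε / 8) / a := norm_integral_exp_smul_le_of_diffContOnCl hg ha hR
        fun z hz hRz ↦ (hR₀ (hRR₀.trans hRz) hz).le
    _ = ε / 2 := by field_simp; norm_num
    _ < ε := half_lt_self hε

end JordanLemma

section SimplePole

lemma tendsto_inv_sub_cobounded {𝕜 : Type*} [NormedDivisionRing 𝕜] (w : 𝕜) :
    Tendsto (fun z ↦ (z - w)⁻¹) (cobounded 𝕜) (𝓝 0) :=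
  tendsto_inv₀_cobounded.comp (tendsto_sub_const_cobounded w)

lemma diffContOnCl_inv_sub {𝕜 : Type*} [NontriviallyNormedField 𝕜] {s : Set 𝕜} {w : 𝕜}
    (hw : w ∉ closure s) : DiffContOnCl 𝕜 (fun z ↦ (z - w)⁻¹) s :=
  (differentiable_id.sub_const w).diffContOnCl.inv fun _ hz ↦
    sub_ne_zero.2 (ne_of_mem_of_not_mem hz hw)

end SimplePole

section FourierTransform

variable {f g : ℝ → ℂ} {F : ℂ → ℂ} {ξ : ℝ}

lemma truncFT_comp_neg (f : ℝ → ℂ) (ξ R : ℝ) :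
    truncFT (fun x ↦ f (-x)) ξ R = truncFT f (-ξ) R := by
  simpa [truncFT] using intervalIntegral.integral_comp_neg (a := -R) (b := R)
    fun x : ℝ ↦ exp (-(I * x * (-ξ : ℝ))) * f x

lemma truncFT_sub (hf : LocallyIntegrable f) (hg : LocallyIntegrable g) (ξ R : ℝ) :
    truncFT (fun x ↦ f x - g x) ξ R = truncFT f ξ R - truncFT g ξ R := by
  have h_int {u : ℝ → ℂ} (hu : LocallyIntegrable u) :
      IntervalIntegrable (fun x : ℝ ↦ exp (-(I * x * ξ)) * u x) volume (-R) R := by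
    have h_u : IntervalIntegrable u volume (-R) R :=
      (hu.integrableOn_isCompact isCompact_uIcc).intervalIntegrable
    exact h_u.continuousOn_mul (by fun_prop)
  simp only [truncFT, mul_sub]
  exact intervalIntegral.integral_sub (h_int hf) (h_int hg)

lemma tendsto_truncFT_of_integrable (hf : Integrable f) (ξ : ℝ) :
    Tendsto (truncFT f ξ) atTop (𝓝 (∫ x : ℝ, exp (-(I * x * ξ)) * f x)) := by
  refine intervalIntegral_tendsto_integral ?_ tendsto_neg_atTop_atBot tendsto_id
  refine hf.bdd_mul (c := 1) (by fun_prop) (.of_forall fun x ↦ ?_)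
  simp [norm_exp]

theorem tendsto_truncFT_of_diffContOnCl_im_pos (hF : DiffContOnCl ℂ F {z | 0 < z.im})
    (hF₀ : Tendsto F (cobounded ℂ ⊓ 𝓟 {z | 0 ≤ z.im}) (𝓝 0)) (hξ : ξ < 0) :
    Tendsto (truncFT (fun x ↦ F x) ξ) atTop (𝓝 0) := by
  refine (tendsto_integral_exp_smul_of_diffContOnCl hF hF₀ (neg_pos.2 hξ)).congr fun R ↦ ?_
  refine intervalIntegral.integral_congr fun x _ ↦ ?_
  simp [mul_right_comm]

theorem tendsto_truncFT_of_diffContOnCl_im_neg (hF : DiffContOnCl ℂ F {z | z.im < 0})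
    (hF₀ : Tendsto F (cobounded ℂ ⊓ 𝓟 {z | z.im ≤ 0}) (𝓝 0)) (hξ : 0 < ξ) :
    Tendsto (truncFT (fun x ↦ F x) ξ) atTop (𝓝 0) := by
  have h_diff : DiffContOnCl ℂ (fun z ↦ F (-z)) {z | 0 < z.im} :=
    hF.comp differentiable_neg.diffContOnCl fun z hz ↦ by simpa using hz
  have h_lim : Tendsto (fun z ↦ F (-z)) (cobounded ℂ ⊓ 𝓟 {z | 0 ≤ z.im}) (𝓝 0) :=
    hF₀.comp <| tendsto_neg_cobounded.inf <|
      tendsto_principal_principal.2 fun z hz ↦ by simpa using hz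
  have h_reflected := tendsto_truncFT_of_diffContOnCl_im_pos h_diff h_lim (neg_neg_of_pos hξ)
  refine h_reflected.congr fun R ↦ ?_
  simpa using truncFT_comp_neg (fun x ↦ F x) (-ξ) R

theorem szegoProjEq_of_tendsto_truncFT (hf : Integrable f) (hg : LocallyIntegrable g)
    (h_neg : ∀ ξ < 0, Tendsto (truncFT g ξ) atTop (𝓝 0))
    (h_pos : ∀ ξ > 0, Tendsto (truncFT (fun x ↦ f x - g x) ξ) atTop (𝓝 0)) :
    SzegoProjEq f g := by
  filter_upwards [Measure.ae_ne volume 0] with ξ hξ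
  rcases hξ.lt_or_gt with hξ | hξ
  · rw [if_neg hξ.not_ge]
    exact (h_neg ξ hξ).limUnder_eq
  · have h_f := tendsto_truncFT_of_integrable hf ξ
    have h_g : Tendsto (truncFT g ξ) atTop (𝓝 (∫ x : ℝ, exp (-(I * x * ξ)) * f x)) := by
      simpa [truncFT_sub hf.locallyIntegrable hg] using h_f.sub (h_pos ξ hξ)
    rw [if_pos hξ.le]
    exact h_g.limUnder_eq.trans h_f.limUnder_eq.symm

end FourierTransform

section Eta

lemma ofReal_add_I_ne_zero (x : ℝ) : (x : ℂ) + I ≠ 0 :=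
  fun h ↦ by simpa using congrArg im h

lemma ofReal_sub_I_ne_zero (x : ℝ) : (x : ℂ) - I ≠ 0 :=
  fun h ↦ by simpa using congrArg im h

lemma hasDerivAt_eta (x : ℝ) : HasDerivAt eta (-1 / ((x : ℂ) + I) ^ 2) x := by
  have h_shift : HasDerivAt (fun y : ℝ ↦ (y : ℂ) + I) 1 x :=
    (hasDerivAt_id x).ofReal_comp.add_const I
  have h_eta : eta = fun y : ℝ ↦ ((y : ℂ) + I)⁻¹ := by simp [funext_iff, eta]
  rw [h_eta]
  exact h_shift.fun_inv (ofReal_add_I_ne_zero x)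

lemma continuous_eta : Continuous eta :=
  continuous_iff_continuousAt.2 fun x ↦ (hasDerivAt_eta x).continuousAt

lemma norm_eta_sq (x : ℝ) : ‖eta x‖ ^ 2 = (1 + x ^ 2)⁻¹ := by
  rw [eta, norm_div, norm_one, div_pow, one_pow, one_div, Complex.sq_norm]
  simp [normSq_apply, add_comm, sq]

lemma integrable_norm_eta_sq_mul_eta : Integrable fun x ↦ (‖eta x‖ : ℂ) ^ 2 * eta x := by
  have h_cont := continuous_eta
  refine integrable_inv_one_add_sq.mono' (by fun_prop) (.of_forall fun x ↦ ?_)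
  have h_le_one : ‖eta x‖ ≤ 1 := by
    rw [← sq_le_one_iff₀ (norm_nonneg _), norm_eta_sq]
    exact inv_le_one_of_one_le₀ (by nlinarith)
  rw [norm_mul, norm_pow, norm_real, norm_norm, norm_eta_sq]
  exact mul_le_of_le_one_right (by positivity) h_le_one

lemma hfun_eq (x : ℝ) : hfun x = 1 / (4 * ((x : ℂ) + I)) + I / (2 * ((x : ℂ) + I) ^ 2) := by
  have h_ne := ofReal_add_I_ne_zero x
  rw [hfun, (hasDerivAt_eta x).deriv, eta]
  field_simp
  ring

lemma continuous_hfun : Continuous hfun := by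
  rw [funext hfun_eq]
  fun_prop (disch := simp [ofReal_add_I_ne_zero])

lemma norm_eta_sq_mul_eta_sub_hfun (x : ℝ) :
    (‖eta x‖ : ℂ) ^ 2 * eta x - hfun x = -(1 / (4 * ((x : ℂ) - I))) := by
  have h_add := ofReal_add_I_ne_zero x
  have h_sub := ofReal_sub_I_ne_zero x
  have h_norm : (‖eta x‖ : ℂ) ^ 2 = (((x : ℂ) + I) * (x - I))⁻¹ := by
    rw [← ofReal_pow, norm_eta_sq]
    push_cast
    congr 1
    linear_combination I_sq
  rw [h_norm, hfun_eq, eta]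
  field_simp
  linear_combination 8 * I_sq

lemma tendsto_truncFT_hfun {ξ : ℝ} (hξ : ξ < 0) : Tendsto (truncFT hfun ξ) atTop (𝓝 0) := by
  let F (z : ℂ) : ℂ := 1 / 4 * (z + I)⁻¹ + I / 2 * ((z + I)⁻¹ * (z + I)⁻¹)
  have h_F : hfun = fun x : ℝ ↦ F x := funext fun x ↦ by
    simp only [hfun_eq, F, div_eq_mul_inv, mul_inv, sq]
    ring
  have h_diff : DiffContOnCl ℂ F {z | 0 < z.im} := by
    have h_inv : DiffContOnCl ℂ (fun z ↦ (z + I)⁻¹) {z | 0 < z.im} := by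
      simpa using diffContOnCl_inv_sub (w := -I) (s := {z | 0 < z.im})
        (by simp [closure_setOfPred_lt_im])
    exact (h_inv.const_smul (1 / 4 : ℂ)).add ((h_inv.smul h_inv).const_smul (I / 2))
  have h_lim : Tendsto F (cobounded ℂ) (𝓝 0) := by
    have h_inv : Tendsto (fun z : ℂ ↦ (z + I)⁻¹) (cobounded ℂ) (𝓝 0) := by
      simpa using tendsto_inv_sub_cobounded (-I)
    simpa only [mul_zero, add_zero] using
      (h_inv.const_mul (1 / 4 : ℂ)).add ((h_inv.mul h_inv).const_mul (I / 2))
  rw [h_F]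
  exact tendsto_truncFT_of_diffContOnCl_im_pos h_diff (h_lim.mono_left inf_le_left) hξ

lemma tendsto_truncFT_norm_eta_sq_mul_eta_sub_hfun {ξ : ℝ} (hξ : 0 < ξ) :
    Tendsto (truncFT (fun x ↦ (‖eta x‖ : ℂ) ^ 2 * eta x - hfun x) ξ) atTop (𝓝 0) := by
  let F (z : ℂ) : ℂ := -(1 / 4) * (z - I)⁻¹
  have h_F : (fun x ↦ (‖eta x‖ : ℂ) ^ 2 * eta x - hfun x) = fun x : ℝ ↦ F x := funext fun x ↦ by
    simp only [norm_eta_sq_mul_eta_sub_hfun, F, div_eq_mul_inv, mul_inv]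
    ring
  have h_diff : DiffContOnCl ℂ F {z | z.im < 0} :=
    (diffContOnCl_inv_sub (by simp [closure_setOfPred_im_lt])).const_smul (-(1 / 4) : ℂ)
  have h_lim : Tendsto F (cobounded ℂ) (𝓝 0) := by
    simpa only [mul_zero] using (tendsto_inv_sub_cobounded I).const_mul (-(1 / 4) : ℂ)
  rw [h_F]
  exact tendsto_truncFT_of_diffContOnCl_im_neg h_diff (h_lim.mono_left inf_le_left) hξ

end Eta

/-- `Π(|η|²η) = h`, i.e. `(i/2)η' + Π(|η|²η) - η/4 = 0`:
`η` is a critical point of the energy functional. -/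
theorem statement14 :
    (∀ x : ℝ, hfun x = 1 / (4 * ((x : ℂ) + Complex.I))
        + Complex.I / (2 * ((x : ℂ) + Complex.I) ^ 2)) ∧
    -- the Fourier transform of h is supported in [0,∞)
    (∀ ξ : ℝ, ξ < 0 → FT hfun ξ = 0) ∧
    -- |η|²η - h = -1/(4(x-i)), whose Fourier transform is supported in (-∞,0]
    (∀ x : ℝ, (‖eta x‖ : ℂ) ^ 2 * eta x - hfun x = -(1 / (4 * ((x : ℂ) - Complex.I)))) ∧
    (∀ ξ : ℝ, 0 < ξ → FT (fun x => (‖eta x‖ : ℂ) ^ 2 * eta x - hfun x) ξ = 0) ∧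
    -- consequently Π(|η|²η) = h
    SzegoProjEq (fun x => (‖eta x‖ : ℂ) ^ 2 * eta x) hfun := by
  refine ⟨hfun_eq, fun ξ hξ ↦ (tendsto_truncFT_hfun hξ).limUnder_eq, norm_eta_sq_mul_eta_sub_hfun,
    fun ξ hξ ↦ (tendsto_truncFT_norm_eta_sq_mul_eta_sub_hfun hξ).limUnder_eq, ?_⟩
  exact szegoProjEq_of_tendsto_truncFT integrable_norm_eta_sq_mul_eta
    continuous_hfun.locallyIntegrable (fun _ ↦ tendsto_truncFT_hfun)
    fun _ ↦ tendsto_truncFT_norm_eta_sq_mul_eta_sub_hfun
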